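/- arXiv:1302.1336 — 3 statements merged into one kernel-verified Lean document; each statement's English description precedes it below -/
import Mathlib

section
/- Variational form of the negativity: let ρ be a bipartite quantum state on ι_A × ι_B. Then (a) for all Hermitian matrices σ₊, σ₋ on ι_A × ι_B with ρ = σ₊ − σ₋ and both σ₊^{T_A} and σ₋^{T_A} positive semidefinite, one has Re tr σ₋ ≥ N(ρ); and (b) there exist Hermitian σ₊, σ₋ with ρ = σ₊ − σ₋, σ₊^{T_A} and σ₋^{T_A} positive semidefinite, and Re tr σ₋ = N(ρ). Hence N(ρ) = min { tr σ₋ : ρ = σ₊ − σ₋, σ₊^{T_A} ≥ 0, σ₋^{T_A} ≥ 0 }. -/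
open Matrix
open scoped Kronecker ComplexOrder

/-- Partial transpose on the first tensor factor. -/
def ptA {ιA ιB : Type*} (ρ : Matrix (ιA × ιB) (ιA × ιB) ℂ) : Matrix (ιA × ιB) (ιA × ιB) ℂ :=
  fun p q => ρ (q.1, p.2) (p.1, q.2)

/-- Sum of the absolute values of the negative eigenvalues of a Hermitian matrix
(0 if the matrix is not Hermitian). -/
noncomputable def negEig {ι : Type*} [Fintype ι] [DecidableEq ι] (M : Matrix ι ι ℂ) : ℝ :=
  letI := Classical.dec M.IsHermitian
  if h : M.IsHermitian then ∑ i, max 0 (-(h.eigenvalues i)) else 0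

/-! Partial transposition is a linear involution preserving traces and Hermiticity, so the claim is
that a Hermitian matrix `M` satisfies `negEig M = min {tr Q : M = P - Q, P ≥ 0, Q ≥ 0}`. The Jordan
decomposition `M = M⁺ - M⁻` attains this value, which is a lower bound because, in an orthonormal
eigenbasis of `M` with eigenvalues `λᵢ`, the `i`-th diagonal entry of `Q = P - M` is at least both
`0` and `-λᵢ`. -/

section HermitianMatrix

variable {𝕜 n ι : Type*} [RCLike 𝕜] [Fintype n] [Fintype ι]

lemma trace_eq_sum_star_dotProduct_mulVec (A : Matrix n n 𝕜)
    (b : OrthonormalBasis ι 𝕜 (EuclideanSpace 𝕜 n)) :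
    A.trace = ∑ i, star ⇑(b i) ⬝ᵥ (A *ᵥ ⇑(b i)) := by
  classical
  have trace_toLin : (toLpLin 2 2 A).trace 𝕜 (EuclideanSpace 𝕜 n) = A.trace :=
    A.trace_toLin_eq (PiLp.basisFun 2 𝕜 n)
  rw [← trace_toLin, LinearMap.trace_eq_sum_inner _ b]
  refine Finset.sum_congr rfl fun i _ ↦ ?_
  rw [EuclideanSpace.inner_eq_star_dotProduct, dotProduct_comm]
  rfl

variable [DecidableEq n]

lemma trace_cfc_eq_sum_eigenvalues {A : Matrix n n 𝕜} (hA : A.IsHermitian) (f : ℝ → ℝ) :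
    (cfc f A).trace = ∑ i, (f (hA.eigenvalues i) : 𝕜) := by
  rw [hA.cfc_eq, IsHermitian.cfc, Unitary.conjStarAlgAut_apply, trace_mul_cycle,
    Unitary.coe_star_mul_self, one_mul, trace_diagonal]
  rfl

lemma sum_max_zero_neg_eigenvalues_le_re_trace {M P Q : Matrix n n 𝕜} (hM : M.IsHermitian)
    (hP : P.PosSemidef) (hQ : Q.PosSemidef) (hMPQ : M = P - Q) :
    ∑ i, max 0 (-hM.eigenvalues i) ≤ RCLike.re Q.trace := by
  rw [trace_eq_sum_star_dotProduct_mulVec Q hM.eigenvectorBasis, map_sum]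
  refine Finset.sum_le_sum fun i _ ↦ max_le (hQ.re_dotProduct_nonneg _) ?_
  set v : n → 𝕜 := ⇑(hM.eigenvectorBasis i)
  have eigenvalue_eq : hM.eigenvalues i =
      RCLike.re (star v ⬝ᵥ (P *ᵥ v)) - RCLike.re (star v ⬝ᵥ (Q *ᵥ v)) := by
    rw [hM.eigenvalues_eq, ← map_sub, ← dotProduct_sub, ← sub_mulVec, ← hMPQ]
  linarith [hP.re_dotProduct_nonneg v]

lemma trace_negPart_eq_sum_eigenvalues {M : Matrix n n 𝕜} (hM : M.IsHermitian) :
    (M⁻).trace = ∑ i, ((max 0 (-hM.eigenvalues i) : ℝ) : 𝕜) := by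
  rw [CFC.negPart_def, cfcₙ_eq_cfc, trace_cfc_eq_sum_eigenvalues hM]
  simp only [negPart_def, max_comm]

end HermitianMatrix

section NegEig

variable {n : Type*} [Fintype n] [DecidableEq n] {M P Q : Matrix n n ℂ}

lemma negEig_eq_sum_eigenvalues (hM : M.IsHermitian) :
    negEig M = ∑ i, max 0 (-hM.eigenvalues i) :=
  dif_pos hM

lemma negEig_le_re_trace (hP : P.PosSemidef) (hQ : Q.PosSemidef) (hMPQ : M = P - Q) :
    negEig M ≤ Q.trace.re := by
  have hM : M.IsHermitian := hMPQ ▸ hP.isHermitian.sub hQ.isHermitian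
  rw [negEig_eq_sum_eigenvalues hM]
  exact sum_max_zero_neg_eigenvalues_le_re_trace hM hP hQ hMPQ

lemma re_trace_negPart_eq_negEig (hM : M.IsHermitian) : (M⁻).trace.re = negEig M := by
  rw [trace_negPart_eq_sum_eigenvalues hM, negEig_eq_sum_eigenvalues hM, Complex.re_sum]
  rfl

end NegEig

section PartialTranspose

variable {ιA ιB : Type*}

lemma ptA_ptA (ρ : Matrix (ιA × ιB) (ιA × ιB) ℂ) : ptA (ptA ρ) = ρ := rfl

lemma ptA_sub (ρ σ : Matrix (ιA × ιB) (ιA × ιB) ℂ) : ptA (ρ - σ) = ptA ρ - ptA σ := rfl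

lemma trace_ptA [Fintype ιA] [Fintype ιB] (ρ : Matrix (ιA × ιB) (ιA × ιB) ℂ) :
    (ptA ρ).trace = ρ.trace := rfl

lemma isHermitian_ptA {ρ : Matrix (ιA × ιB) (ιA × ιB) ℂ} (hρ : ρ.IsHermitian) :
    (ptA ρ).IsHermitian :=
  IsHermitian.ext fun _ _ ↦ hρ.apply _ _

end PartialTranspose

open scoped MatrixOrder in
theorem negativity_variational_form_general {ιA ιB : Type*} [Fintype ιA] [Fintype ιB]
    [DecidableEq ιA] [DecidableEq ιB] {ρ : Matrix (ιA × ιB) (ιA × ιB) ℂ} (hρ : ρ.IsHermitian) :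
    (∀ σp σm : Matrix (ιA × ιB) (ιA × ιB) ℂ, ρ = σp - σm →
      (ptA σp).PosSemidef → (ptA σm).PosSemidef → negEig (ptA ρ) ≤ σm.trace.re) ∧
    (∃ σp σm : Matrix (ιA × ιB) (ιA × ιB) ℂ, σp.IsHermitian ∧ σm.IsHermitian ∧
      ρ = σp - σm ∧ (ptA σp).PosSemidef ∧ (ptA σm).PosSemidef ∧
      σm.trace.re = negEig (ptA ρ)) := by
  refine ⟨fun σp σm hσ hp hm ↦ ?_, ?_⟩
  · rw [← trace_ptA σm]
    exact negEig_le_re_trace hp hm (by rw [hσ, ptA_sub])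
  · have hM := isHermitian_ptA hρ
    have hpos : ((ptA ρ)⁺).PosSemidef := (CFC.posPart_nonneg (ptA ρ)).posSemidef
    have hneg : ((ptA ρ)⁻).PosSemidef := (CFC.negPart_nonneg (ptA ρ)).posSemidef
    refine ⟨ptA (ptA ρ)⁺, ptA (ptA ρ)⁻, isHermitian_ptA hpos.isHermitian,
      isHermitian_ptA hneg.isHermitian, ?_, hpos, hneg, ?_⟩
    · rw [← ptA_sub, CFC.posPart_sub_negPart _ hM, ptA_ptA]
    · rw [trace_ptA, re_trace_negPart_eq_negEig hM]

/-- variational form of the negativity. (a) Every decomposition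
ρ = σ₊ - σ₋ with σ₊^{T_A}, σ₋^{T_A} ⪰ 0 satisfies tr σ₋ ≥ N(ρ); (b) some such
decomposition attains tr σ₋ = N(ρ). Hence N(ρ) is the minimum of tr σ₋. -/
theorem negativity_variational_form
    {ιA ιB : Type*} [Fintype ιA] [Fintype ιB] [Nonempty ιA] [Nonempty ιB]
    [DecidableEq ιA] [DecidableEq ιB]
    (ρ : Matrix (ιA × ιB) (ιA × ιB) ℂ) (hρ : ρ.PosSemidef) (htr : Matrix.trace ρ = 1) :
    (∀ σp σm : Matrix (ιA × ιB) (ιA × ιB) ℂ, σp.IsHermitian → σm.IsHermitian →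
      ρ = σp - σm → (ptA σp).PosSemidef → (ptA σm).PosSemidef →
      (Matrix.trace σm).re ≥ negEig (ptA ρ)) ∧
    (∃ σp σm : Matrix (ιA × ιB) (ιA × ιB) ℂ, σp.IsHermitian ∧ σm.IsHermitian ∧
      ρ = σp - σm ∧ (ptA σp).PosSemidef ∧ (ptA σm).PosSemidef ∧
      (Matrix.trace σm).re = negEig (ptA ρ)) := by
  have h := negativity_variational_form_general hρ.isHermitian
  exact ⟨fun σp σm _ _ ↦ h.1 σp σm, h.2⟩
end

section
/- Partial transposition of the moment matrix (property (ii)): let ρ be a complex matrix indexed by (ι_A × ι_B) × (ι_A × ι_B) whose partial transpose ρ^{T_A} is positive semidefinite, and let A : κ_A → Matrix ι_A ι_A ℂ, B : κ_B → Matrix ι_B ι_B ℂ be finite families of matrices. Then the partial transpose of the moment matrix, defined by χ[ρ]^{T_Ā}((i,j),(k,l)) = χ[ρ]((k,j),(i,l)), is positive semidefinite. -/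
open Matrix
open scoped Kronecker ComplexOrder

/-- The moment matrix of ρ with respect to the families A, B:
χ[ρ]((i,j),(k,l)) = tr[ρ · ((A k)ᴴ (A i) ⊗ (B l)ᴴ (B j))]. -/
noncomputable def momentMatrix {ιA ιB κA κB : Type*} [Fintype ιA] [Fintype ιB]
    (ρ : Matrix (ιA × ιB) (ιA × ιB) ℂ)
    (A : κA → Matrix ιA ιA ℂ) (B : κB → Matrix ιB ιB ℂ) :
    Matrix (κA × κB) (κA × κB) ℂ :=
  fun p q => Matrix.trace (ρ * (((A q.1)ᴴ * A p.1) ⊗ₖ ((B q.2)ᴴ * B p.2)))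

/- Partial transposition is self-adjoint for the trace pairing and sends `M ⊗ N` to `Mᵀ ⊗ N`. Since
`((A i)ᴴ * A k)ᵀ = (A' k)ᴴ * A' i` for the entrywise conjugates `A'`, the partial transpose of
`χ[ρ]` is again a moment matrix, that of `ρ^{T_A}` for the families `A'` and `B`. A moment matrix of
a positive semidefinite matrix is a Gram matrix, hence positive semidefinite. -/

section PosSemidef

variable {R κ m n : Type*} [Ring R] [PartialOrder R] [StarRing R]

theorem posSemidef_of_forall_finset_submatrix {M : Matrix κ κ R}
    (hM : ∀ s : Finset κ, (M.submatrix ((↑) : s → κ) (↑)).PosSemidef) : M.PosSemidef := by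
  classical
  refine ⟨IsHermitian.ext fun i j => ?_, fun x => ?_⟩
  · exact (hM {i, j}).isHermitian.apply ⟨i, by simp⟩ ⟨j, by simp⟩
  · obtain ⟨s, y, rfl⟩ : ∃ (s : Finset κ) (y : s →₀ R), y.embDomain (.subtype (· ∈ s)) = x :=
      ⟨x.support, x.subtypeDomain (· ∈ x.support), by
        rw [← Finsupp.extendDomain_eq_embDomain_subtype,
          Finsupp.extendDomain_subtypeDomain x fun _ h => h]⟩
    simpa only [Finsupp.sum_embDomain, Function.Embedding.subtype_apply, submatrix_apply]
      using (hM s).2 y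

-- `Matrix.PosSemidef.mul_mul_conjTranspose_same` for a possibly infinite row type.
theorem posSemidef_mul_mul_conjTranspose [Fintype n] {σ : Matrix n n R} (hσ : σ.PosSemidef)
    (B : Matrix κ n R) : (B * σ * Bᴴ).PosSemidef :=
  posSemidef_of_forall_finset_submatrix fun s =>
    hσ.mul_mul_conjTranspose_same (B.submatrix ((↑) : s → κ) id)

theorem posSemidef_trace_mul_mul_conjTranspose [AddLeftMono R] [Fintype m] [Fintype n]
    {σ : Matrix n n R} (hσ : σ.PosSemidef) (C : κ → Matrix m n R) :
    (of fun p q => trace (C p * σ * (C q)ᴴ)).PosSemidef := by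
  let rows (z : m) : Matrix κ n R := of fun p => C p z
  have sum_rows : (of fun p q => trace (C p * σ * (C q)ᴴ)) =
      ∑ z, rows z * σ * (rows z)ᴴ := by
    ext p q
    rw [Matrix.sum_apply]
    rfl
  rw [sum_rows]
  exact posSemidef_sum _ fun z _ => posSemidef_mul_mul_conjTranspose hσ (rows z)

end PosSemidef

section PartialTranspose

variable {ιA ιB : Type*}

theorem ptA_kronecker (M : Matrix ιA ιA ℂ) (N : Matrix ιB ιB ℂ) : ptA (M ⊗ₖ N) = Mᵀ ⊗ₖ N :=
  rfl

theorem trace_ptA_mul [Fintype ιA] [Fintype ιB] (ρ σ : Matrix (ιA × ιB) (ιA × ιB) ℂ) :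
    trace (ptA ρ * σ) = trace (ρ * ptA σ) := by
  let swapA : ((ιA × ιB) × (ιA × ιB)) ≃ ((ιA × ιB) × (ιA × ιB)) :=
    Function.Involutive.toPerm (fun w => ((w.2.1, w.1.2), (w.1.1, w.2.2))) fun _ => rfl
  simp only [trace, diag_apply, mul_apply, ← Fintype.sum_prod_type']
  exact Fintype.sum_equiv swapA _ _ fun _ => rfl

end PartialTranspose

section MomentMatrix

variable {ιA ιB κA κB : Type*} [Fintype ιA] [Fintype ιB]

theorem ptA_momentMatrix (ρ : Matrix (ιA × ιB) (ιA × ιB) ℂ)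
    (A : κA → Matrix ιA ιA ℂ) (B : κB → Matrix ιB ιB ℂ) :
    ptA (momentMatrix ρ A B) = momentMatrix (ptA ρ) (fun i => (A i).map star) B := by
  ext p q
  have transpose_conj_mul : (((A q.1).map star)ᴴ * (A p.1).map star)ᵀ = (A p.1)ᴴ * A q.1 := by
    rw [← transpose_conjTranspose, ← transpose_conjTranspose, conjTranspose_conjTranspose,
      transpose_mul, transpose_transpose, conjTranspose_transpose_eq_transpose_conjTranspose,
      transpose_transpose]
  calc ptA (momentMatrix ρ A B) p q
      = trace (ρ * (((A p.1)ᴴ * A q.1) ⊗ₖ ((B q.2)ᴴ * B p.2))) := rfl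
    _ = trace (ρ * ptA ((((A q.1).map star)ᴴ * (A p.1).map star) ⊗ₖ ((B q.2)ᴴ * B p.2))) := by
      rw [ptA_kronecker, transpose_conj_mul]
    _ = momentMatrix (ptA ρ) (fun i => (A i).map star) B p q := (trace_ptA_mul _ _).symm

theorem posSemidef_momentMatrix {ρ : Matrix (ιA × ιB) (ιA × ιB) ℂ} (hρ : ρ.PosSemidef)
    (A : κA → Matrix ιA ιA ℂ) (B : κB → Matrix ιB ιB ℂ) :
    (momentMatrix ρ A B).PosSemidef := by
  have gram : momentMatrix ρ A B = of fun p q =>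
      trace ((A p.1 ⊗ₖ B p.2) * ρ * (A q.1 ⊗ₖ B q.2)ᴴ) := by
    ext p q
    rw [of_apply, momentMatrix, mul_kronecker_mul, ← conjTranspose_kronecker, ← Matrix.mul_assoc,
      trace_mul_cycle]
  rw [gram]
  exact posSemidef_trace_mul_mul_conjTranspose hρ fun p : κA × κB => A p.1 ⊗ₖ B p.2

theorem momentMatrix_partialTranspose_posSemidef_general
    (ρ : Matrix (ιA × ιB) (ιA × ιB) ℂ) (hρ : (ptA ρ).PosSemidef)
    (A : κA → Matrix ιA ιA ℂ) (B : κB → Matrix ιB ιB ℂ) :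
    (ptA (momentMatrix ρ A B)).PosSemidef := by
  rw [ptA_momentMatrix]
  exact posSemidef_momentMatrix hρ _ B

end MomentMatrix

/-- property (ii): if ρ^{T_A} is positive semidefinite then so is the
partial transpose χ[ρ]^{T_Ā} of the moment matrix. -/
theorem momentMatrix_partialTranspose_posSemidef
    {ιA ιB κA κB : Type*} [Fintype ιA] [Fintype ιB] [Fintype κA] [Fintype κB]
    [Nonempty ιA] [Nonempty ιB] [DecidableEq ιA] [DecidableEq ιB]
    (ρ : Matrix (ιA × ιB) (ιA × ιB) ℂ) (hρ : (ptA ρ).PosSemidef)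
    (A : κA → Matrix ιA ιA ℂ) (B : κB → Matrix ιB ιB ℂ) :
    (ptA (momentMatrix ρ A B)).PosSemidef :=
  momentMatrix_partialTranspose_posSemidef_general ρ hρ A B
end

section
/- PPT mixtures cannot violate the Svetlichny inequality: let ρ be a tripartite quantum state on ι_A × ι_B × ι_C admitting a decomposition ρ = σ_A + σ_B + σ_C into positive semidefinite Hermitian matrices with σ_A^{T_A}, σ_B^{T_B} and σ_C^{T_C} all positive semidefinite (i.e. ρ is a PPT mixture). Then for all dichotomic observables A₁, A₂, B₁, B₂, C₁, C₂ on the respective factors, the Svetlichny value satisfies S ≤ 4. -/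
open Matrix
open scoped Kronecker ComplexOrder

/-- Partial transpose on the second factor of a tripartite space. -/
def ptB3 {ιA ιB ιC : Type*} (σ : Matrix (ιA × ιB × ιC) (ιA × ιB × ιC) ℂ) :
    Matrix (ιA × ιB × ιC) (ιA × ιB × ιC) ℂ :=
  fun p q => σ (p.1, q.2.1, p.2.2) (q.1, p.2.1, q.2.2)

/-- Partial transpose on the third factor of a tripartite space. -/
def ptC3 {ιA ιB ιC : Type*} (σ : Matrix (ιA × ιB × ιC) (ιA × ιB × ιC) ℂ) :
    Matrix (ιA × ιB × ιC) (ιA × ιB × ιC) ℂ :=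
  fun p q => σ (p.1, p.2.1, q.2.2) (q.1, q.2.1, p.2.2)

/-- The Svetlichny expression for a tripartite state and dichotomic observables. -/
noncomputable def svetlichnyValue {ιA ιB ιC : Type*} [Fintype ιA] [Fintype ιB] [Fintype ιC]
    (ρ : Matrix (ιA × ιB × ιC) (ιA × ιB × ιC) ℂ)
    (A : Fin 2 → Matrix ιA ιA ℂ) (B : Fin 2 → Matrix ιB ιB ℂ) (C : Fin 2 → Matrix ιC ιC ℂ) : ℝ :=
  let E : Fin 2 → Fin 2 → Fin 2 → ℝ := fun x y z =>
    (Matrix.trace (ρ * ((A x) ⊗ₖ ((B y) ⊗ₖ (C z))))).re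
  E 0 0 0 + E 0 0 1 + E 0 1 0 + E 1 0 0 - E 0 1 1 - E 1 0 1 - E 1 1 0 - E 1 1 1

/-!
Let `Sᵀ` and `σᵀ` be the partial transposes of the Svetlichny operator `S` and of a PPT part `σ`
across the cut `A | BC`. Both `⟨(S - 4)²⟩` in `σ` and `⟨(Sᵀ - 4)²⟩` in `σᵀ` are nonnegative, and
both involve the same mean `⟨S⟩ = ⟨Sᵀ⟩`, so it suffices to bound the sum of the second moments by
`32`. Since partial transposition reverses products on `A`, the commutator of the `A x` cancels
from that sum: writing `a`, `b`, `c` for the anticommutators and `β`, `γ` for the commutators of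
the observables on `B` and `C`, it is the expectation of `16 - 4βγ - 2abc`. This is at most `32`
because `β² = b² - 4` and `γ² = c² - 4` give, with `u` the product of the observables on `A`,
`8 + 2βγ + abc = |β - γ|² + |b + uc|²`. The other two cuts follow by rotating the tensor factors.
-/

section Trace

variable {m n : Type*} [Fintype m] [Fintype n]

lemma trace_submatrix_equiv {R : Type*} [AddCommMonoid R] (e : m ≃ n) (X : Matrix n n R) :
    trace (X.submatrix e e) = trace X :=
  e.sum_comp fun i => X i i

lemma trace_submatrix_mul_submatrix {R : Type*} [NonUnitalNonAssocSemiring R] (e : m ≃ n)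
    (X Y : Matrix n n R) : trace (X.submatrix e e * Y.submatrix e e) = trace (X * Y) := by
  rw [submatrix_mul_equiv, trace_submatrix_equiv]

lemma posSemidef_mul_self_of_isHermitian {R : Type*} [Ring R] [PartialOrder R] [StarRing R]
    [StarOrderedRing R] {X : Matrix n n R} (hX : X.IsHermitian) : (X * X).PosSemidef := by
  simpa only [hX.eq] using posSemidef_conjTranspose_mul_self X

open scoped MatrixOrder in
lemma trace_mul_nonneg_of_posSemidef {𝕜 : Type*} [RCLike 𝕜] {X Y : Matrix n n 𝕜}
    (hX : X.PosSemidef) (hY : Y.PosSemidef) : 0 ≤ trace (X * Y) := by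
  classical
  obtain ⟨Z, rfl⟩ := CStarAlgebra.nonneg_iff_eq_star_mul_self.mp hY.nonneg
  rw [star_eq_conjTranspose, ← mul_assoc, trace_mul_comm, ← mul_assoc]
  exact (hX.mul_mul_conjTranspose_same Z).trace_nonneg

lemma two_mul_re_trace_mul_le {σ X : Matrix n n ℂ} (hσ : σ.PosSemidef) (hX : X.IsHermitian)
    (c : ℝ) :
    2 * c * (trace (σ * X)).re ≤ (trace (σ * (X * X))).re + c ^ 2 * (trace σ).re := by
  classical
  have hXc : (X - c • 1).IsHermitian := by simp [IsHermitian, hX.eq]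
  have hexp : σ * ((X - c • 1) * (X - c • 1)) = σ * (X * X) - (2 * c) • (σ * X) + c ^ 2 • σ := by
    simp only [sub_mul, mul_sub, smul_mul_assoc, mul_smul_comm, one_mul, mul_one]
    module
  have hnonneg := (Complex.le_def.mp (trace_mul_nonneg_of_posSemidef hσ
    (posSemidef_mul_self_of_isHermitian hXc))).1
  simp only [hexp, trace_add, trace_sub, trace_smul, Complex.add_re, Complex.sub_re,
    Complex.smul_re, smul_eq_mul, Complex.zero_re] at hnonneg
  linarith

end Trace

section PartialTranspose

variable {m n : Type*}

lemma ptA_ptA_s17 (X : Matrix (m × n) (m × n) ℂ) : ptA (ptA X) = X := rfl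

lemma ptA_add (X Y : Matrix (m × n) (m × n) ℂ) : ptA (X + Y) = ptA X + ptA Y := rfl

lemma ptA_kronecker_s17 (X : Matrix m m ℂ) (Y : Matrix n n ℂ) : ptA (X ⊗ₖ Y) = Xᵀ ⊗ₖ Y := rfl

lemma isHermitian_ptA_s17 {X : Matrix (m × n) (m × n) ℂ} (hX : X.IsHermitian) :
    (ptA X).IsHermitian :=
  IsHermitian.ext fun _ _ => hX.apply _ _

variable [Fintype m] [Fintype n]

lemma trace_ptA_s17 (X : Matrix (m × n) (m × n) ℂ) : trace (ptA X) = trace X := rfl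

lemma trace_ptA_mul_s17 (X Y : Matrix (m × n) (m × n) ℂ) :
    trace (ptA X * Y) = trace (X * ptA Y) := by
  simp only [trace, diag, mul_apply, ptA, Fintype.sum_prod_type]
  calc ∑ i, ∑ j, ∑ k, ∑ l, X (k, j) (i, l) * Y (k, l) (i, j)
      = ∑ i, ∑ k, ∑ j, ∑ l, X (k, j) (i, l) * Y (k, l) (i, j) :=
        Finset.sum_congr rfl fun _ _ => Finset.sum_comm
    _ = ∑ k, ∑ i, ∑ j, ∑ l, X (k, j) (i, l) * Y (k, l) (i, j) := Finset.sum_comm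
    _ = ∑ k, ∑ j, ∑ i, ∑ l, X (k, j) (i, l) * Y (k, l) (i, j) :=
        Finset.sum_congr rfl fun _ _ => Finset.sum_comm

/-- The square of `X` plus the square of its partial transpose, the latter transposed back. Its
expectation in `σ` adds the second moment of `X` in `σ` to that of `ptA X` in `ptA σ`. -/
def ptSquareSum (X : Matrix (m × n) (m × n) ℂ) : Matrix (m × n) (m × n) ℂ :=
  X * X + ptA (ptA X * ptA X)

theorem re_trace_mul_le_of_ppt [DecidableEq m] [DecidableEq n]
    {σ S : Matrix (m × n) (m × n) ℂ} (hσ : σ.PosSemidef) (hσ' : (ptA σ).PosSemidef)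
    (hS : S.IsHermitian) {c : ℝ} (hc : 0 < c)
    (hbound : ((2 * c ^ 2) • 1 - ptSquareSum S).PosSemidef) :
    (trace (σ * S)).re ≤ c * (trace σ).re := by
  have hvar := two_mul_re_trace_mul_le hσ hS c
  have hvar' := two_mul_re_trace_mul_le hσ' (isHermitian_ptA_s17 hS) c
  rw [trace_ptA_mul_s17, trace_ptA_mul_s17, ptA_ptA_s17, trace_ptA_s17] at hvar'
  have hsum := (Complex.le_def.mp (trace_mul_nonneg_of_posSemidef hσ hbound)).1
  simp only [ptSquareSum, mul_sub, mul_add, mul_smul_comm, mul_one, trace_sub, trace_add,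
    trace_smul, Complex.sub_re, Complex.add_re, Complex.smul_re, smul_eq_mul,
    Complex.zero_re] at hsum
  refine le_of_mul_le_mul_left ?_ hc
  linarith

end PartialTranspose

section Anticommutator

/-- The anticommutator `{a, b} = ab + ba`, the symmetric counterpart of the bracket `⁅a, b⁆`. -/
def anticommutator {R : Type*} [Mul R] [Add R] (a b : R) : R := a * b + b * a

variable {R : Type*} [Ring R] {a b : R}

lemma commutator_mul_self_of_involutions (ha : a * a = 1) (hb : b * b = 1) :
    ⁅a, b⁆ * ⁅a, b⁆ = anticommutator a b * anticommutator a b - 4 • 1 := by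
  have haab : a * b * (b * a) = 1 := by rw [mul_assoc, ← mul_assoc b, hb, one_mul, ha]
  have hbba : b * a * (a * b) = 1 := by rw [mul_assoc, ← mul_assoc a, ha, one_mul, hb]
  simp only [Ring.lie_def, anticommutator, add_mul, mul_add, sub_mul, mul_sub, haab, hbba]
  abel

lemma add_mul_self_of_involutions (ha : a * a = 1) (hb : b * b = 1) :
    (a + b) * (a + b) = 2 • 1 + anticommutator a b := by
  simp only [anticommutator, add_mul, mul_add, ha, hb]
  abel

lemma sub_mul_self_of_involutions (ha : a * a = 1) (hb : b * b = 1) :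
    (a - b) * (a - b) = 2 • 1 - anticommutator a b := by
  simp only [anticommutator, sub_mul, mul_sub, ha, hb]
  abel

lemma anticommutator_add_sub_of_involutions (ha : a * a = 1) (hb : b * b = 1) :
    anticommutator (a + b) (a - b) = 0 := by
  simp only [anticommutator, sub_mul, mul_sub, add_mul, mul_add, ha, hb]
  abel

variable [StarRing R]

lemma star_commutator_of_isSelfAdjoint (ha : IsSelfAdjoint a) (hb : IsSelfAdjoint b) :
    star ⁅a, b⁆ = -⁅a, b⁆ := by
  simp [Ring.lie_def, ha.star_eq, hb.star_eq]

lemma isSelfAdjoint_anticommutator (ha : IsSelfAdjoint a) (hb : IsSelfAdjoint b) :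
    IsSelfAdjoint (anticommutator a b) := by
  simp [IsSelfAdjoint, anticommutator, ha.star_eq, hb.star_eq, add_comm]

end Anticommutator

section Kronecker

section Linearity

variable {R l m n p : Type*} [NonUnitalNonAssocRing R]

lemma kronecker_sub (X : Matrix l m R) (Y Z : Matrix n p R) :
    X ⊗ₖ (Y - Z) = X ⊗ₖ Y - X ⊗ₖ Z := by
  ext; simp [mul_sub]

lemma sub_kronecker (X Y : Matrix l m R) (Z : Matrix n p R) :
    (X - Y) ⊗ₖ Z = X ⊗ₖ Z - Y ⊗ₖ Z := by
  ext; simp [sub_mul]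

lemma kronecker_neg (X : Matrix l m R) (Y : Matrix n p R) : X ⊗ₖ (-Y) = -(X ⊗ₖ Y) := by
  ext; simp

lemma neg_kronecker (X : Matrix l m R) (Y : Matrix n p R) : (-X) ⊗ₖ Y = -(X ⊗ₖ Y) := by
  ext; simp

end Linearity

variable {𝕜 m n : Type*} [CommRing 𝕜] [Fintype m] [Fintype n] [DecidableEq m]

lemma conjTranspose_mul_self_one_kronecker_add_kronecker [StarRing 𝕜] {U : Matrix m m 𝕜}
    {X Y : Matrix n n 𝕜} (hU : Uᴴ * U = 1) (hX : X.IsHermitian) (hY : Y.IsHermitian)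
    (hXY : Commute X Y) :
    (1 ⊗ₖ X + U ⊗ₖ Y)ᴴ * (1 ⊗ₖ X + U ⊗ₖ Y) =
      1 ⊗ₖ (X * X + Y * Y) + (U + Uᴴ) ⊗ₖ (X * Y) := by
  simp only [conjTranspose_add, conjTranspose_kronecker, conjTranspose_one, hX.eq, hY.eq, add_mul,
    mul_add, ← mul_kronecker_mul, one_mul, mul_one, hU, ← hXY.eq, add_kronecker, kronecker_add]
  abel

variable [DecidableEq n] {B₀ B₁ : Matrix m m 𝕜} {C₀ C₁ : Matrix n n 𝕜}

lemma kronecker_involutions_sq_add_sq (hB₀ : B₀ * B₀ = 1) (hB₁ : B₁ * B₁ = 1)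
    (hC₀ : C₀ * C₀ = 1) (hC₁ : C₁ * C₁ = 1) :
    (B₀ ⊗ₖ C₀ - B₁ ⊗ₖ C₁) * (B₀ ⊗ₖ C₀ - B₁ ⊗ₖ C₁) +
        (B₀ ⊗ₖ C₁ + B₁ ⊗ₖ C₀) * (B₀ ⊗ₖ C₁ + B₁ ⊗ₖ C₀) =
      4 • 1 - ⁅B₀, B₁⁆ ⊗ₖ ⁅C₀, C₁⁆ := by
  simp only [Ring.lie_def, mul_add, add_mul, mul_sub, sub_mul, ← mul_kronecker_mul, kronecker_sub,
    sub_kronecker, hB₀, hB₁, hC₀, hC₁, one_kronecker_one]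
  abel

lemma kronecker_involutions_sq_sub_sq (hB₀ : B₀ * B₀ = 1) (hB₁ : B₁ * B₁ = 1)
    (hC₀ : C₀ * C₀ = 1) (hC₁ : C₁ * C₁ = 1) :
    (B₀ ⊗ₖ C₀ - B₁ ⊗ₖ C₁) * (B₀ ⊗ₖ C₀ - B₁ ⊗ₖ C₁) -
        (B₀ ⊗ₖ C₁ + B₁ ⊗ₖ C₀) * (B₀ ⊗ₖ C₁ + B₁ ⊗ₖ C₀) =
      -(anticommutator B₀ B₁ ⊗ₖ anticommutator C₀ C₁) := by
  simp only [anticommutator, mul_add, add_mul, mul_sub, sub_mul, ← mul_kronecker_mul,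
    kronecker_add, add_kronecker, hB₀, hB₁, hC₀, hC₁, one_kronecker_one]
  abel

end Kronecker

lemma ptSquareSum_kronecker_add_kronecker {m n : Type*} [Fintype m] [Fintype n]
    (X Y : Matrix m m ℂ) (P Q : Matrix n n ℂ) :
    ptSquareSum (X ⊗ₖ P + Y ⊗ₖ Q) =
      2 • (X * X) ⊗ₖ (P * P) + 2 • (Y * Y) ⊗ₖ (Q * Q) +
        anticommutator X Y ⊗ₖ anticommutator P Q := by
  simp only [ptSquareSum, anticommutator, ptA_add, ptA_kronecker_s17, add_mul, mul_add,
    ← mul_kronecker_mul, ← transpose_mul, transpose_transpose, add_kronecker, kronecker_add]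
  abel

section Svetlichny

/-- A dichotomic observable: a Hermitian involution, i.e. an observable with outcomes `±1`. -/
structure IsDichotomic {ι 𝕜 : Type*} [Fintype ι] [DecidableEq ι] [Semiring 𝕜] [StarRing 𝕜]
    (A : Matrix ι ι 𝕜) : Prop where
  isHermitian : A.IsHermitian
  mul_self : A * A = 1

/-- The Bell operator of the Svetlichny expression, factored as a sum of two products across the
cut `A | BC`. -/
def svetlichnyOperator {𝕜 ιA ιB ιC : Type*} [Ring 𝕜] (A : Fin 2 → Matrix ιA ιA 𝕜)
    (B : Fin 2 → Matrix ιB ιB 𝕜) (C : Fin 2 → Matrix ιC ιC 𝕜) :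
    Matrix (ιA × ιB × ιC) (ιA × ιB × ιC) 𝕜 :=
  (A 0 + A 1) ⊗ₖ (B 0 ⊗ₖ C 0 - B 1 ⊗ₖ C 1) + (A 0 - A 1) ⊗ₖ (B 0 ⊗ₖ C 1 + B 1 ⊗ₖ C 0)

variable {𝕜 ιA ιB ιC : Type*}

lemma isHermitian_svetlichnyOperator [CommRing 𝕜] [StarRing 𝕜] {A : Fin 2 → Matrix ιA ιA 𝕜}
    {B : Fin 2 → Matrix ιB ιB 𝕜} {C : Fin 2 → Matrix ιC ιC 𝕜} (hA : ∀ x, (A x).IsHermitian)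
    (hB : ∀ y, (B y).IsHermitian) (hC : ∀ z, (C z).IsHermitian) :
    (svetlichnyOperator A B C).IsHermitian := by
  simp only [IsHermitian, svetlichnyOperator, conjTranspose_add, conjTranspose_sub,
    conjTranspose_kronecker, (hA _).eq, (hB _).eq, (hC _).eq]

/-- The cyclic relabelling of tensor factors that brings the last factor to the front. -/
def rotateFactors (ιA ιB ιC : Type*) : ιC × ιA × ιB ≃ ιA × ιB × ιC :=
  (Equiv.prodComm ιC (ιA × ιB)).trans (Equiv.prodAssoc ιA ιB ιC)

lemma kronecker_submatrix_rotateFactors [CommSemigroup 𝕜] (X : Matrix ιA ιA 𝕜) (Y : Matrix ιB ιB 𝕜)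
    (Z : Matrix ιC ιC 𝕜) :
    (X ⊗ₖ (Y ⊗ₖ Z)).submatrix (rotateFactors ιA ιB ιC) (rotateFactors ιA ιB ιC) =
      Z ⊗ₖ (X ⊗ₖ Y) := by
  ext
  simp only [rotateFactors, submatrix_apply, kroneckerMap_apply, Equiv.trans_apply,
    Equiv.prodComm_apply, Equiv.prodAssoc_apply, Prod.fst_swap, Prod.snd_swap]
  rw [← mul_assoc, mul_comm]

variable [Fintype ιA] [Fintype ιB] [Fintype ιC]

lemma svetlichnyValue_eq_re_trace (ρ : Matrix (ιA × ιB × ιC) (ιA × ιB × ιC) ℂ)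
    (A : Fin 2 → Matrix ιA ιA ℂ) (B : Fin 2 → Matrix ιB ιB ℂ) (C : Fin 2 → Matrix ιC ιC ℂ) :
    svetlichnyValue ρ A B C = (trace (ρ * svetlichnyOperator A B C)).re := by
  simp only [svetlichnyValue, svetlichnyOperator, kronecker_add, add_kronecker, kronecker_sub,
    sub_kronecker, mul_add, mul_sub, trace_add, trace_sub, Complex.add_re, Complex.sub_re]
  ring

lemma svetlichnyValue_add (ρ σ : Matrix (ιA × ιB × ιC) (ιA × ιB × ιC) ℂ)
    (A : Fin 2 → Matrix ιA ιA ℂ) (B : Fin 2 → Matrix ιB ιB ℂ) (C : Fin 2 → Matrix ιC ιC ℂ) :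
    svetlichnyValue (ρ + σ) A B C = svetlichnyValue ρ A B C + svetlichnyValue σ A B C := by
  simp only [svetlichnyValue_eq_re_trace, add_mul, trace_add, Complex.add_re]

lemma svetlichnyValue_rotate (ρ : Matrix (ιA × ιB × ιC) (ιA × ιB × ιC) ℂ)
    (A : Fin 2 → Matrix ιA ιA ℂ) (B : Fin 2 → Matrix ιB ιB ℂ) (C : Fin 2 → Matrix ιC ιC ℂ) :
    svetlichnyValue (ρ.submatrix (rotateFactors ιA ιB ιC) (rotateFactors ιA ιB ιC)) C A B =
      svetlichnyValue ρ A B C := by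
  have htrace (x y z : Fin 2) :
      trace (ρ.submatrix (rotateFactors ιA ιB ιC) (rotateFactors ιA ιB ιC) *
        C z ⊗ₖ (A x ⊗ₖ B y)) = trace (ρ * A x ⊗ₖ (B y ⊗ₖ C z)) := by
    rw [← kronecker_submatrix_rotateFactors, trace_submatrix_mul_submatrix]
  simp only [svetlichnyValue, htrace]
  ring

variable [DecidableEq ιA] [DecidableEq ιB] [DecidableEq ιC]

lemma ptSquareSum_svetlichnyOperator {A : Fin 2 → Matrix ιA ιA ℂ}
    {B : Fin 2 → Matrix ιB ιB ℂ} {C : Fin 2 → Matrix ιC ιC ℂ} (hA : ∀ x, A x * A x = 1)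
    (hB : ∀ y, B y * B y = 1) (hC : ∀ z, C z * C z = 1) :
    ptSquareSum (svetlichnyOperator A B C) =
      16 • 1 - 4 • 1 ⊗ₖ (⁅B 0, B 1⁆ ⊗ₖ ⁅C 0, C 1⁆) -
        2 • anticommutator (A 0) (A 1) ⊗ₖ
          (anticommutator (B 0) (B 1) ⊗ₖ anticommutator (C 0) (C 1)) := by
  set P := B 0 ⊗ₖ C 0 - B 1 ⊗ₖ C 1 with hP
  set Q := B 0 ⊗ₖ C 1 + B 1 ⊗ₖ C 0 with hQ
  have hadd := kronecker_involutions_sq_add_sq (hB 0) (hB 1) (hC 0) (hC 1)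
  have hsub := kronecker_involutions_sq_sub_sq (hB 0) (hB 1) (hC 0) (hC 1)
  rw [← hP, ← hQ] at hadd hsub
  calc
    ptSquareSum (svetlichnyOperator A B C)
      = 2 • (2 • 1 + anticommutator (A 0) (A 1)) ⊗ₖ (P * P) +
          2 • (2 • 1 - anticommutator (A 0) (A 1)) ⊗ₖ (Q * Q) := by
      rw [svetlichnyOperator, ptSquareSum_kronecker_add_kronecker,
        anticommutator_add_sub_of_involutions (hA 0) (hA 1),
        add_mul_self_of_involutions (hA 0) (hA 1), sub_mul_self_of_involutions (hA 0) (hA 1),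
        zero_kronecker, add_zero]
    _ = 4 • 1 ⊗ₖ (P * P + Q * Q) + 2 • anticommutator (A 0) (A 1) ⊗ₖ (P * P - Q * Q) := by
      simp only [add_kronecker, sub_kronecker, kronecker_add, kronecker_sub, smul_kronecker]
      module
    _ = _ := by
      rw [hadd, hsub, kronecker_sub, kronecker_neg, kronecker_smul, one_kronecker_one]
      module

lemma conjTranspose_mul_self_commutator_sub_commutator [CommRing 𝕜] [StarRing 𝕜]
    {B₀ B₁ : Matrix ιB ιB 𝕜} {C₀ C₁ : Matrix ιC ιC 𝕜} (hB₀ : IsDichotomic B₀)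
    (hB₁ : IsDichotomic B₁) (hC₀ : IsDichotomic C₀) (hC₁ : IsDichotomic C₁) :
    (⁅B₀, B₁⁆ ⊗ₖ 1 - 1 ⊗ₖ ⁅C₀, C₁⁆)ᴴ * (⁅B₀, B₁⁆ ⊗ₖ 1 - 1 ⊗ₖ ⁅C₀, C₁⁆) =
      8 • 1 - (anticommutator B₀ B₁ * anticommutator B₀ B₁) ⊗ₖ 1 -
        1 ⊗ₖ (anticommutator C₀ C₁ * anticommutator C₀ C₁) + 2 • ⁅B₀, B₁⁆ ⊗ₖ ⁅C₀, C₁⁆ := by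
  have hβ : ⁅B₀, B₁⁆ᴴ = -⁅B₀, B₁⁆ := star_commutator_of_isSelfAdjoint hB₀.1 hB₁.1
  have hγ : ⁅C₀, C₁⁆ᴴ = -⁅C₀, C₁⁆ := star_commutator_of_isSelfAdjoint hC₀.1 hC₁.1
  simp only [conjTranspose_sub, conjTranspose_kronecker, conjTranspose_one, hβ, hγ,
    neg_kronecker, kronecker_neg, neg_mul, ← mul_kronecker_mul, sub_mul, mul_sub, one_mul,
    mul_one]
  rw [commutator_mul_self_of_involutions hB₀.mul_self hB₁.mul_self,
    commutator_mul_self_of_involutions hC₀.mul_self hC₁.mul_self]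
  simp only [kronecker_sub, sub_kronecker, kronecker_smul, smul_kronecker, one_kronecker_one]
  abel

lemma posSemidef_commutators_add_anticommutators
    [CommRing 𝕜] [PartialOrder 𝕜] [StarRing 𝕜] [StarOrderedRing 𝕜]
    {A₀ A₁ : Matrix ιA ιA 𝕜} {B₀ B₁ : Matrix ιB ιB 𝕜} {C₀ C₁ : Matrix ιC ιC 𝕜}
    (hA₀ : IsDichotomic A₀) (hA₁ : IsDichotomic A₁) (hB₀ : IsDichotomic B₀)
    (hB₁ : IsDichotomic B₁) (hC₀ : IsDichotomic C₀) (hC₁ : IsDichotomic C₁) :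
    (8 • 1 + 2 • 1 ⊗ₖ (⁅B₀, B₁⁆ ⊗ₖ ⁅C₀, C₁⁆) + anticommutator A₀ A₁ ⊗ₖ
      (anticommutator B₀ B₁ ⊗ₖ anticommutator C₀ C₁)).PosSemidef := by
  set b := anticommutator B₀ B₁
  set c := anticommutator C₀ C₁
  let K : Matrix (ιA × ιB × ιC) (ιA × ιB × ιC) 𝕜 := 1 ⊗ₖ (⁅B₀, B₁⁆ ⊗ₖ 1 - 1 ⊗ₖ ⁅C₀, C₁⁆)
  let L : Matrix (ιA × ιB × ιC) (ιA × ιB × ιC) 𝕜 := 1 ⊗ₖ (b ⊗ₖ 1) + (A₀ * A₁) ⊗ₖ (1 ⊗ₖ c)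
  have hK : Kᴴ * K = 1 ⊗ₖ (8 • 1 - (b * b) ⊗ₖ 1 - 1 ⊗ₖ (c * c) +
      2 • ⁅B₀, B₁⁆ ⊗ₖ ⁅C₀, C₁⁆) := by
    rw [conjTranspose_kronecker, ← mul_kronecker_mul, conjTranspose_one, one_mul,
      conjTranspose_mul_self_commutator_sub_commutator hB₀ hB₁ hC₀ hC₁]
  have hL : Lᴴ * L = 1 ⊗ₖ ((b * b) ⊗ₖ 1 + 1 ⊗ₖ (c * c)) + anticommutator A₀ A₁ ⊗ₖ (b ⊗ₖ c) := by
    have hunitary : (A₀ * A₁)ᴴ * (A₀ * A₁) = 1 := by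
      rw [conjTranspose_mul, hA₀.1.eq, hA₁.1.eq, mul_assoc, ← mul_assoc A₀, hA₀.mul_self,
        one_mul, hA₁.mul_self]
    have hb : bᴴ = b := isSelfAdjoint_anticommutator hB₀.1 hB₁.1
    have hc : cᴴ = c := isSelfAdjoint_anticommutator hC₀.1 hC₁.1
    have hb' : (b ⊗ₖ (1 : Matrix ιC ιC 𝕜)).IsHermitian := by
      rw [IsHermitian, conjTranspose_kronecker, conjTranspose_one, hb]
    have hc' : ((1 : Matrix ιB ιB 𝕜) ⊗ₖ c).IsHermitian := by
      rw [IsHermitian, conjTranspose_kronecker, conjTranspose_one, hc]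
    have hcomm : Commute (b ⊗ₖ (1 : Matrix ιC ιC 𝕜)) ((1 : Matrix ιB ιB 𝕜) ⊗ₖ c) := by
      simp only [Commute, SemiconjBy, ← mul_kronecker_mul, one_mul, mul_one]
    rw [conjTranspose_mul_self_one_kronecker_add_kronecker hunitary hb' hc' hcomm]
    simp only [← mul_kronecker_mul, one_mul, mul_one, conjTranspose_mul, hA₀.1.eq, hA₁.1.eq,
      anticommutator]
  convert (posSemidef_conjTranspose_mul_self K).add (posSemidef_conjTranspose_mul_self L) using 1
  rw [hK, hL]
  simp only [kronecker_add, kronecker_sub, kronecker_smul, one_kronecker_one]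
  abel

variable {σ : Matrix (ιA × ιB × ιC) (ιA × ιB × ιC) ℂ} {A : Fin 2 → Matrix ιA ιA ℂ}
  {B : Fin 2 → Matrix ιB ιB ℂ} {C : Fin 2 → Matrix ιC ιC ℂ}

theorem svetlichnyValue_le_of_ptA (hσ : σ.PosSemidef) (hσ' : (ptA σ).PosSemidef)
    (hA : ∀ x, IsDichotomic (A x)) (hB : ∀ y, IsDichotomic (B y)) (hC : ∀ z, IsDichotomic (C z)) :
    svetlichnyValue σ A B C ≤ 4 * (trace σ).re := by
  rw [svetlichnyValue_eq_re_trace]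
  refine re_trace_mul_le_of_ppt hσ hσ' (isHermitian_svetlichnyOperator
    (fun x => (hA x).isHermitian) (fun y => (hB y).isHermitian) fun z => (hC z).isHermitian)
    four_pos ?_
  have h := posSemidef_commutators_add_anticommutators (hA 0) (hA 1) (hB 0) (hB 1) (hC 0) (hC 1)
  rw [ptSquareSum_svetlichnyOperator (fun x => (hA x).mul_self)
    (fun y => (hB y).mul_self) fun z => (hC z).mul_self]
  refine (congrArg PosSemidef ?_).mpr (h.add h)
  module

theorem svetlichnyValue_le_of_ptC3 (hσ : σ.PosSemidef) (hσ' : (ptC3 σ).PosSemidef)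
    (hA : ∀ x, IsDichotomic (A x)) (hB : ∀ y, IsDichotomic (B y)) (hC : ∀ z, IsDichotomic (C z)) :
    svetlichnyValue σ A B C ≤ 4 * (trace σ).re := by
  rw [← svetlichnyValue_rotate, ← trace_submatrix_equiv (rotateFactors ιA ιB ιC) σ]
  exact svetlichnyValue_le_of_ptA (hσ.submatrix (rotateFactors ιA ιB ιC))
    (hσ'.submatrix (rotateFactors ιA ιB ιC)) hC hA hB

theorem svetlichnyValue_le_of_ptB3 (hσ : σ.PosSemidef) (hσ' : (ptB3 σ).PosSemidef)
    (hA : ∀ x, IsDichotomic (A x)) (hB : ∀ y, IsDichotomic (B y)) (hC : ∀ z, IsDichotomic (C z)) :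
    svetlichnyValue σ A B C ≤ 4 * (trace σ).re := by
  rw [← svetlichnyValue_rotate, ← trace_submatrix_equiv (rotateFactors ιA ιB ιC) σ]
  exact svetlichnyValue_le_of_ptC3 (hσ.submatrix (rotateFactors ιA ιB ιC))
    (hσ'.submatrix (rotateFactors ιA ιB ιC)) hC hA hB

end Svetlichny

/-- PPT mixtures cannot violate the Svetlichny inequality: if
ρ = σ_A + σ_B + σ_C with all parts positive semidefinite and PPT across the
corresponding bipartitions, then the Svetlichny value is at most 4. -/
theorem ppt_mixtures_satisfy_svetlichny
    {ιA ιB ιC : Type*} [Fintype ιA] [Fintype ιB] [Fintype ιC]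
    [Nonempty ιA] [Nonempty ιB] [Nonempty ιC]
    [DecidableEq ιA] [DecidableEq ιB] [DecidableEq ιC]
    (ρ : Matrix (ιA × ιB × ιC) (ιA × ιB × ιC) ℂ) (hρ : ρ.PosSemidef)
    (htr : Matrix.trace ρ = 1)
    (σA σB σC : Matrix (ιA × ιB × ιC) (ιA × ιB × ιC) ℂ)
    (hdec : ρ = σA + σB + σC)
    (hσA : σA.PosSemidef) (hσB : σB.PosSemidef) (hσC : σC.PosSemidef)
    (hσA' : (ptA σA).PosSemidef) (hσB' : (ptB3 σB).PosSemidef) (hσC' : (ptC3 σC).PosSemidef)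
    (A : Fin 2 → Matrix ιA ιA ℂ) (B : Fin 2 → Matrix ιB ιB ℂ) (C : Fin 2 → Matrix ιC ιC ℂ)
    (hA : ∀ x, (A x).IsHermitian ∧ A x * A x = 1)
    (hB : ∀ y, (B y).IsHermitian ∧ B y * B y = 1)
    (hC : ∀ z, (C z).IsHermitian ∧ C z * C z = 1) :
    svetlichnyValue ρ A B C ≤ 4 := by
  have hA' (x) : IsDichotomic (A x) := ⟨(hA x).1, (hA x).2⟩
  have hB' (y) : IsDichotomic (B y) := ⟨(hB y).1, (hB y).2⟩
  have hC' (z) : IsDichotomic (C z) := ⟨(hC z).1, (hC z).2⟩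
  have htr' : (trace σA).re + (trace σB).re + (trace σC).re = 1 := by
    simp only [← Complex.add_re, ← trace_add, ← hdec, htr, Complex.one_re]
  calc
    svetlichnyValue ρ A B C
        = svetlichnyValue σA A B C + svetlichnyValue σB A B C + svetlichnyValue σC A B C := by
      rw [hdec, svetlichnyValue_add, svetlichnyValue_add]
    _ ≤ 4 * (trace σA).re + 4 * (trace σB).re + 4 * (trace σC).re := by
      gcongr
      · exact svetlichnyValue_le_of_ptA hσA hσA' hA' hB' hC'
      · exact svetlichnyValue_le_of_ptB3 hσB hσB' hA' hB' hC'
      · exact svetlichnyValue_le_of_ptC3 hσC hσC' hA' hB' hC'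
    _ = 4 := by rw [← mul_add, ← mul_add, htr', mul_one]
end
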